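/- Let D = B_R(x₀) ⊂ ℝ² and f ∈ L¹(D). Then the Neumann problem −Δu + u = f in D, ∂u/∂n = 0 on ∂D admits a weak solution u ∈ W^{1,1}(D) satisfying ‖u‖_{W^{1,1}(D)} ≤ C ‖f‖_{L¹(D)}, where C depends only on R. -/

import Mathlib

open MeasureTheory Metric
open scoped ENNReal

/-- `Du` is the weak gradient of `u` on the open set `D`. -/
def IsWeakGrad (D : Set (EuclideanSpace ℝ (Fin 2))) (u : EuclideanSpace ℝ (Fin 2) → ℝ)
    (Du : EuclideanSpace ℝ (Fin 2) → Fin 2 → ℝ) : Prop :=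
  ∀ φ : EuclideanSpace ℝ (Fin 2) → ℝ, ContDiff ℝ (⊤ : ℕ∞) φ → HasCompactSupport φ →
    tsupport φ ⊆ D → ∀ i : Fin 2,
      ∫ x in D, u x * fderiv ℝ φ x (EuclideanSpace.single i (1 : ℝ))
        = - ∫ x in D, Du x i * φ x

/-!
Near-minimizers `v` of the Neumann energy satisfy the equation for a continuous datum up to a
functional of `φ` that is small relative to `sup |φ| + ‖∇φ‖₂`, and `L¹` data reduce to continuous
ones since `|∫ f φ| ≤ ‖f‖₁ sup |φ|`. The `W^{1,1}` norm of `v` is controlled by the dual norm of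
`φ ↦ ∫ (∇v · ∇φ + v φ)`: testing with a bounded increasing function `ψ(v)`, whose derivative is at
least of order `1 / (⟨v⟩ s(v))` for a slowly growing weight `s`, bounds `∫ |v|` and
`∫ ψ'(v) |∇v|²`, hence `(∫ |∇v|)²` by a multiple of `∫ (1 + |v|) s(v)`. A weighted Poincaré
inequality bounds the latter by an affine function of `∫ |∇v|`, which can be absorbed. By
linearity the approximate solutions are then Cauchy in `W^{1,1}`.
-/

/-! ### A weighted Poincaré inequality on convex sets -/

lemma setLIntegral_Ioo_inv_sqrt :
    ∫⁻ τ in Set.Ioo (0 : ℝ) 1, (ENNReal.ofReal √τ)⁻¹ = 2 := by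
  have hcongr : ∀ τ ∈ Set.Ioo (0 : ℝ) 1,
      (ENNReal.ofReal √τ)⁻¹ = ENNReal.ofReal (τ ^ (-1 / 2 : ℝ)) := fun τ hτ => by
    rw [← ENNReal.ofReal_inv_of_pos (Real.sqrt_pos.2 hτ.1), Real.sqrt_eq_rpow,
      ← Real.rpow_neg hτ.1.le, neg_div]
  have hi : IntegrableOn (fun τ : ℝ => τ ^ (-1 / 2 : ℝ)) (Set.Ioo 0 1) :=
    (intervalIntegral.integrableOn_Ioo_rpow_iff one_pos).2 (by norm_num)
  rw [setLIntegral_congr_fun measurableSet_Ioo hcongr, ← ofReal_integral_eq_lintegral_ofReal hi,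
    ← integral_Ioc_eq_integral_Ioo, ← intervalIntegral.integral_of_le zero_le_one,
    integral_rpow (Or.inl (by norm_num))]
  · norm_num
  · exact (ae_restrict_mem measurableSet_Ioo).mono fun τ hτ => Real.rpow_nonneg hτ.1.le _

section Segments

variable {E : Type*} [NormedAddCommGroup E] [NormedSpace ℝ E] [FiniteDimensional ℝ E]
  [MeasurableSpace E] [BorelSpace E] {μ : Measure E} [μ.IsAddHaarMeasure] {D : Set E}

lemma setLIntegral_comp_lineMap_le (hD : MeasurableSet D) (hc : Convex ℝ D) {x : E} (hx : x ∈ D)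
    {τ : ℝ} (hτ : τ ∈ Set.Ioc 0 1) {H : E → ℝ≥0∞} (hH : Measurable H) :
    ∫⁻ z in D, H (AffineMap.lineMap x z τ) ∂μ ≤
      (ENNReal.ofReal τ ^ Module.finrank ℝ E)⁻¹ * ∫⁻ z in D, H z ∂μ := by
  have hmem : ∀ z ∈ D, AffineMap.lineMap x z τ ∈ D := fun z hz =>
    hc.lineMap_mem hx hz ⟨hτ.1.le, hτ.2⟩
  have hHD : Measurable (D.indicator H) := hH.indicator hD
  calc ∫⁻ z in D, H (AffineMap.lineMap x z τ) ∂μ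
      = ∫⁻ z in D, D.indicator H (τ • z + (1 - τ) • x) ∂μ :=
        setLIntegral_congr_fun hD fun z hz => by
          rw [add_comm, ← AffineMap.lineMap_apply_module, Set.indicator_of_mem (hmem z hz)]
    _ ≤ ∫⁻ z, D.indicator H (τ • z + (1 - τ) • x) ∂μ := setLIntegral_le_lintegral _ _
    _ = ∫⁻ y, D.indicator H (y + (1 - τ) • x) ∂(μ.map (τ • ·)) :=
        (lintegral_map (f := fun y => D.indicator H (y + (1 - τ) • x))
          (hHD.comp (measurable_add_const _)) (measurable_const_smul τ)).symm
    _ = (ENNReal.ofReal τ ^ Module.finrank ℝ E)⁻¹ * ∫⁻ z in D, H z ∂μ := by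
        rw [Measure.map_addHaar_smul _ hτ.1.ne', lintegral_smul_measure, smul_eq_mul,
          lintegral_add_right_eq_self (D.indicator H), lintegral_indicator hD,
          abs_of_pos (inv_pos.2 (pow_pos hτ.1 _)), ENNReal.ofReal_inv_of_pos (pow_pos hτ.1 _),
          ENNReal.ofReal_pow hτ.1.le]

lemma setLIntegral_setLIntegral_comp_lineMap_le (hD : MeasurableSet D) (hc : Convex ℝ D)
    {τ : ℝ} (hτ : τ ∈ Set.Ioo 0 1) {H : E → ℝ≥0∞} (hH : Measurable H) :
    ∫⁻ x in D, ∫⁻ z in D, H (AffineMap.lineMap x z τ) ∂μ ∂μ ≤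
      2 ^ Module.finrank ℝ E * μ D * ∫⁻ z in D, H z ∂μ := by
  have of_half_le : ∀ σ ∈ Set.Ico (1 / 2 : ℝ) 1,
      ∫⁻ x in D, ∫⁻ z in D, H (AffineMap.lineMap x z σ) ∂μ ∂μ ≤
        2 ^ Module.finrank ℝ E * μ D * ∫⁻ z in D, H z ∂μ := fun σ hσ => by
    have hσ2 : (ENNReal.ofReal σ)⁻¹ ≤ 2 := by
      rw [ENNReal.inv_le_iff_inv_le, ← ENNReal.ofReal_ofNat 2,
        ← ENNReal.ofReal_inv_of_pos two_pos]
      exact ENNReal.ofReal_le_ofReal (by linarith [hσ.1])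
    calc ∫⁻ x in D, ∫⁻ z in D, H (AffineMap.lineMap x z σ) ∂μ ∂μ
        ≤ ∫⁻ _ in D, 2 ^ Module.finrank ℝ E * ∫⁻ z in D, H z ∂μ ∂μ :=
          setLIntegral_mono' hD fun x hx =>
            (setLIntegral_comp_lineMap_le hD hc hx ⟨by linarith [hσ.1], hσ.2.le⟩ hH).trans
              (by rw [ENNReal.inv_pow]; gcongr)
      _ = 2 ^ Module.finrank ℝ E * μ D * ∫⁻ z in D, H z ∂μ := by rw [setLIntegral_const]; ring
  -- For `τ ≤ 1 / 2`, exchange the roles of the endpoints `x` and `z`.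
  rcases le_total (1 / 2) τ with h | h
  · exact of_half_le τ ⟨h, hτ.2⟩
  · have hm : Measurable fun p : E × E => H (AffineMap.lineMap p.1 p.2 τ) :=
      hH.comp (continuous_fst.lineMap continuous_snd continuous_const).measurable
    rw [lintegral_lintegral_swap (f := fun x z => H (AffineMap.lineMap x z τ)) hm.aemeasurable]
    simp only [← AffineMap.lineMap_apply_one_sub _ _ τ]
    exact of_half_le (1 - τ) ⟨by linarith, by linarith [hτ.1]⟩

lemma ennreal_le_pow_mul_pow_add_inv (s t : ℝ≥0∞) (n : ℕ) :
    s ≤ t ^ (2 * n) * s ^ (2 * n + 1) + t⁻¹ := by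
  rcases le_or_gt s t⁻¹ with h | h
  · exact h.trans le_add_self
  · have hts : 1 ≤ t * s :=
      (ENNReal.inv_le_iff_le_mul (fun hs ht => by simp [hs, ht] at h)
        (fun ht hs => by simp [hs, ht] at h)).1 h.le
    calc s ≤ (t * s) ^ (2 * n) * s := le_mul_of_one_le_left' (one_le_pow₀ hts)
      _ = t ^ (2 * n) * s ^ (2 * n + 1) := by ring
      _ ≤ _ := le_self_add

-- For fixed `x` the average of `H` along the segments costs a factor `τ⁻ⁿ`, not integrable at `0`.
-- Splitting `s` with `t = √τ` cancels it against `t ^ (2 * n)` and leaves the integrable `t⁻¹`.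
lemma setLIntegral_setLIntegral_mul_comp_lineMap_le (hD : MeasurableSet D) (hc : Convex ℝ D)
    {τ : ℝ} (hτ : τ ∈ Set.Ioo 0 1) {H s : E → ℝ≥0∞} (hH : Measurable H) (hs : Measurable s) :
    ∫⁻ x in D, ∫⁻ z in D, s x * H (AffineMap.lineMap x z τ) ∂μ ∂μ ≤
      (∫⁻ x in D, s x ^ (2 * Module.finrank ℝ E + 1) ∂μ +
        (ENNReal.ofReal √τ)⁻¹ * (2 ^ Module.finrank ℝ E * μ D)) * ∫⁻ z in D, H z ∂μ := by
  set n := Module.finrank ℝ E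
  set t := ENNReal.ofReal √τ
  have ht : t ^ (2 * n) = ENNReal.ofReal τ ^ n := by
    rw [pow_mul, ← ENNReal.ofReal_pow (Real.sqrt_nonneg τ), Real.sq_sqrt hτ.1.le]
  have hHτ : ∀ x, Measurable fun z => H (AffineMap.lineMap x z τ) := fun x =>
    hH.comp (continuous_const.lineMap continuous_id continuous_const).measurable
  have hpt : ∀ x ∈ D, ∫⁻ z in D, s x * H (AffineMap.lineMap x z τ) ∂μ ≤
      s x ^ (2 * n + 1) * ∫⁻ z in D, H z ∂μ +
        t⁻¹ * ∫⁻ z in D, H (AffineMap.lineMap x z τ) ∂μ := fun x hx => by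
    rw [lintegral_const_mul _ (hHτ x)]
    calc s x * ∫⁻ z in D, H (AffineMap.lineMap x z τ) ∂μ
        ≤ (t ^ (2 * n) * s x ^ (2 * n + 1) + t⁻¹) *
            ∫⁻ z in D, H (AffineMap.lineMap x z τ) ∂μ := by
          gcongr
          exact ennreal_le_pow_mul_pow_add_inv _ _ _
      _ = s x ^ (2 * n + 1) * (t ^ (2 * n) * ∫⁻ z in D, H (AffineMap.lineMap x z τ) ∂μ) +
            t⁻¹ * ∫⁻ z in D, H (AffineMap.lineMap x z τ) ∂μ := by ring
      _ ≤ s x ^ (2 * n + 1) * (t ^ (2 * n) * ((ENNReal.ofReal τ ^ n)⁻¹ * ∫⁻ z in D, H z ∂μ)) +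
            t⁻¹ * ∫⁻ z in D, H (AffineMap.lineMap x z τ) ∂μ := by
          gcongr
          exact setLIntegral_comp_lineMap_le hD hc hx ⟨hτ.1, hτ.2.le⟩ hH
      _ = _ := by
          rw [ht, ENNReal.mul_inv_cancel_left (by simp [hτ.1]) (by simp)]
  calc ∫⁻ x in D, ∫⁻ z in D, s x * H (AffineMap.lineMap x z τ) ∂μ ∂μ
      ≤ ∫⁻ x in D, (s x ^ (2 * n + 1) * ∫⁻ z in D, H z ∂μ +
          t⁻¹ * ∫⁻ z in D, H (AffineMap.lineMap x z τ) ∂μ) ∂μ := setLIntegral_mono' hD hpt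
    _ = (∫⁻ x in D, s x ^ (2 * n + 1) ∂μ) * ∫⁻ z in D, H z ∂μ +
          t⁻¹ * ∫⁻ x in D, ∫⁻ z in D, H (AffineMap.lineMap x z τ) ∂μ ∂μ := by
        rw [lintegral_add_left (by fun_prop), lintegral_mul_const _ (by fun_prop),
          lintegral_const_mul' _ _ (by simp [t, hτ.1])]
    _ ≤ (∫⁻ x in D, s x ^ (2 * n + 1) ∂μ) * ∫⁻ z in D, H z ∂μ +
          t⁻¹ * (2 ^ n * μ D * ∫⁻ z in D, H z ∂μ) := by
        gcongr
        exact setLIntegral_setLIntegral_comp_lineMap_le hD hc hτ hH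
    _ = _ := by ring

lemma setLIntegral_setLIntegral_mul_lintegral_lineMap_le (hD : MeasurableSet D)
    (hc : Convex ℝ D) {H s : E → ℝ≥0∞} (hH : Measurable H) (hs : Measurable s) :
    ∫⁻ x in D, ∫⁻ z in D, s x * (∫⁻ τ in Set.Ioo (0 : ℝ) 1, H (AffineMap.lineMap x z τ)) ∂μ ∂μ ≤
      (∫⁻ x in D, s x ^ (2 * Module.finrank ℝ E + 1) ∂μ +
        2 ^ (Module.finrank ℝ E + 1) * μ D) * ∫⁻ z in D, H z ∂μ := by
  have hm : Measurable fun p : E × E × ℝ => s p.1 * H (AffineMap.lineMap p.1 p.2.1 p.2.2) :=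
    (hs.comp measurable_fst).mul (hH.comp (by fun_prop : Continuous fun p : E × E × ℝ =>
      (AffineMap.lineMap p.1 p.2.1 p.2.2 : E)).measurable)
  calc _
      = ∫⁻ x in D, ∫⁻ z in D, (∫⁻ τ in Set.Ioo (0 : ℝ) 1,
          s x * H (AffineMap.lineMap x z τ)) ∂μ ∂μ := by
        congr! 5 with x z
        exact (lintegral_const_mul _ (hH.comp AffineMap.lineMap_continuous.measurable)).symm
    _ = ∫⁻ x in D, (∫⁻ τ in Set.Ioo (0 : ℝ) 1, ∫⁻ z in D,
          s x * H (AffineMap.lineMap x z τ) ∂μ) ∂μ := by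
        congr! 3 with x
        exact lintegral_lintegral_swap (f := fun z τ => s x * H (AffineMap.lineMap x z τ))
          (hm.comp measurable_prodMk_left).aemeasurable
    _ = ∫⁻ τ in Set.Ioo (0 : ℝ) 1, ∫⁻ x in D, ∫⁻ z in D,
          s x * H (AffineMap.lineMap x z τ) ∂μ ∂μ := by
        refine lintegral_lintegral_swap
          (f := fun x τ => ∫⁻ z in D, s x * H (AffineMap.lineMap x z τ) ∂μ)
          (Measurable.aemeasurable ?_)
        exact Measurable.lintegral_prod_right' (ν := μ.restrict D)
          (hm.comp (by fun_prop : Measurable fun q : (E × ℝ) × E => (q.1.1, q.2, q.1.2)))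
    _ ≤ ∫⁻ τ in Set.Ioo (0 : ℝ) 1, (∫⁻ x in D, s x ^ (2 * Module.finrank ℝ E + 1) ∂μ +
          (ENNReal.ofReal √τ)⁻¹ * (2 ^ Module.finrank ℝ E * μ D)) * ∫⁻ z in D, H z ∂μ :=
        setLIntegral_mono' measurableSet_Ioo fun τ hτ =>
          setLIntegral_setLIntegral_mul_comp_lineMap_le hD hc hτ hH hs
    _ = _ := by
        rw [lintegral_mul_const _ (by fun_prop), lintegral_add_left measurable_const,
          lintegral_mul_const _ (by fun_prop), setLIntegral_Ioo_inv_sqrt]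
        simp [pow_succ', mul_assoc]

end Segments

section WeightedPoincare

variable {E F : Type*} [NormedAddCommGroup E] [NormedSpace ℝ E] [NormedAddCommGroup F]
  [NormedSpace ℝ F]

lemma enorm_le_enorm_add_edist_mul_lintegral_fderiv [CompleteSpace F] {v : E → F}
    (hv : ContDiff ℝ 1 v) (x z : E) :
    ‖v x‖ₑ ≤ ‖v z‖ₑ + edist x z *
      ∫⁻ τ in Set.Ioo (0 : ℝ) 1, ‖fderiv ℝ v (AffineMap.lineMap x z τ)‖ₑ := by
  have hcont : Continuous fun τ : ℝ => fderiv ℝ v (AffineMap.lineMap x z τ) :=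
    (hv.continuous_fderiv one_ne_zero).comp AffineMap.lineMap_continuous
  have hftc := intervalIntegral.integral_eq_sub_of_hasDerivAt (a := 0) (b := 1)
    (fun τ _ => ((hv.differentiable one_ne_zero) _).hasFDerivAt.comp_hasDerivAt τ
      AffineMap.hasDerivAt_lineMap) ((hcont.clm_apply continuous_const).intervalIntegrable _ _)
  simp only [Function.comp_apply, AffineMap.lineMap_apply_one, AffineMap.lineMap_apply_zero]
    at hftc
  calc ‖v x‖ₑ = ‖v z - (v z - v x)‖ₑ := by rw [sub_sub_cancel]
    _ ≤ ‖v z‖ₑ + ‖v z - v x‖ₑ := enorm_sub_le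
    _ ≤ _ := by
        gcongr
        rw [← hftc, intervalIntegral.integral_of_le zero_le_one, integral_Ioc_eq_integral_Ioo,
          ← lintegral_const_mul _ hcont.enorm.measurable]
        refine (enorm_integral_le_lintegral_enorm _).trans (lintegral_mono fun τ => ?_)
        rw [mul_comm, edist_comm, edist_eq_enorm_sub]
        exact ContinuousLinearMap.le_opENorm _ _

variable [FiniteDimensional ℝ E] [MeasurableSpace E] [BorelSpace E] {μ : Measure E}
  [μ.IsAddHaarMeasure] {D : Set E}

lemma measure_mul_setLIntegral_enorm_mul_le [CompleteSpace F] (hD : MeasurableSet D)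
    (hc : Convex ℝ D) {v : E → F} (hv : ContDiff ℝ 1 v) {s : E → ℝ≥0∞} (hs : Measurable s) :
    μ D * ∫⁻ x in D, ‖v x‖ₑ * s x ∂μ ≤
      (∫⁻ x in D, ‖v x‖ₑ ∂μ) * (∫⁻ x in D, s x ∂μ) +
        ediam D * ((∫⁻ x in D, s x ^ (2 * Module.finrank ℝ E + 1) ∂μ +
          2 ^ (Module.finrank ℝ E + 1) * μ D) * ∫⁻ x in D, ‖fderiv ℝ v x‖ₑ ∂μ) := by
  have hvm : Measurable fun x => ‖v x‖ₑ := hv.continuous.enorm.measurable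
  have hH : Measurable fun x => ‖fderiv ℝ v x‖ₑ :=
    (hv.continuous_fderiv one_ne_zero).enorm.measurable
  set T : E → E → ℝ≥0∞ := fun x z =>
    ∫⁻ τ in Set.Ioo (0 : ℝ) 1, ‖fderiv ℝ v (AffineMap.lineMap x z τ)‖ₑ
  have hT : Measurable (Function.uncurry T) :=
    Measurable.lintegral_prod_right' (ν := volume.restrict (Set.Ioo (0 : ℝ) 1))
      (hH.comp (by fun_prop : Continuous fun p : (E × E) × ℝ =>
        (AffineMap.lineMap p.1.1 p.1.2 p.2 : E)).measurable)
  calc μ D * ∫⁻ x in D, ‖v x‖ₑ * s x ∂μ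
      = ∫⁻ x in D, ∫⁻ _ in D, ‖v x‖ₑ * s x ∂μ ∂μ := by
        simp only [setLIntegral_const]
        rw [lintegral_mul_const _ (by fun_prop), mul_comm]
    _ ≤ ∫⁻ x in D, ∫⁻ z in D, (s x * ‖v z‖ₑ + ediam D * (s x * T x z)) ∂μ ∂μ := by
        refine setLIntegral_mono' hD fun x hx => setLIntegral_mono' hD fun z hz => ?_
        calc ‖v x‖ₑ * s x ≤ (‖v z‖ₑ + ediam D * T x z) * s x := by
              gcongr
              exact (enorm_le_enorm_add_edist_mul_lintegral_fderiv hv x z).trans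
                (by gcongr; exact edist_le_ediam_of_mem hx hz)
          _ = s x * ‖v z‖ₑ + ediam D * (s x * T x z) := by ring
    _ = (∫⁻ x in D, ‖v x‖ₑ ∂μ) * (∫⁻ x in D, s x ∂μ) +
          ediam D * ∫⁻ x in D, ∫⁻ z in D, s x * T x z ∂μ ∂μ := by
        have hsT : Measurable fun p : E × E => s p.1 * T p.1 p.2 :=
          (hs.comp measurable_fst).mul hT
        have hz : ∀ x, ∫⁻ z in D, (s x * ‖v z‖ₑ + ediam D * (s x * T x z)) ∂μ =
            s x * (∫⁻ z in D, ‖v z‖ₑ ∂μ) + ediam D * ∫⁻ z in D, s x * T x z ∂μ := fun x => by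
          rw [lintegral_add_left (hvm.const_mul _), lintegral_const_mul _ hvm,
            lintegral_const_mul (f := fun z => s x * T x z) _ (hsT.comp measurable_prodMk_left)]
        simp only [hz]
        rw [lintegral_add_left (hs.mul_const _), lintegral_mul_const _ hs,
          lintegral_const_mul _ (hsT.lintegral_prod_right' (ν := μ.restrict D)), mul_comm]
    _ ≤ _ := by
        gcongr
        exact setLIntegral_setLIntegral_mul_lintegral_lineMap_le hD hc hH hs

end WeightedPoincare

lemma setIntegral_one_add {α : Type*} [MeasurableSpace α] {μ : Measure α} {D : Set α}
    (hμ : μ D ≠ ∞) {g : α → ℝ} (hg : IntegrableOn g D μ) :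
    ∫ x in D, (1 + g x) ∂μ = μ.real D + ∫ x in D, g x ∂μ := by
  rw [integral_add (f := fun _ => (1 : ℝ)) (integrableOn_const hμ) hg, setIntegral_const,
    smul_eq_mul, mul_one]

section Bounded

variable {E F : Type*} [MetricSpace E] [ProperSpace E] [MeasurableSpace E]
  [OpensMeasurableSpace E] {μ : Measure E} [NormedAddCommGroup F] {D : Set E}

lemma integrableOn_of_isBounded [IsFiniteMeasureOnCompacts μ] (hb : Bornology.IsBounded D)
    {g : E → F} (hg : Continuous g) : IntegrableOn g D μ :=
  (hg.continuousOn.integrableOn_compact hb.isCompact_closure).mono_set subset_closure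

lemma exists_ae_norm_le_of_isBounded (hb : Bornology.IsBounded D) {g : E → F}
    (hg : Continuous g) : ∃ B, ∀ᵐ x ∂μ.restrict D, ‖g x‖ ≤ B := by
  obtain ⟨B, hB⟩ := hb.isCompact_closure.exists_bound_of_continuousOn hg.continuousOn
  exact ⟨B, ae_restrict_of_ae_restrict_of_subset subset_closure
    ((ae_restrict_mem isClosed_closure.measurableSet).mono hB)⟩

lemma integrableOn_mul_of_isBounded (hb : Bornology.IsBounded D) {f φ : E → ℝ}
    (hf : IntegrableOn f D μ) (hφ : Continuous φ) : IntegrableOn (fun x => f x * φ x) D μ := by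
  obtain ⟨B, hB⟩ := exists_ae_norm_le_of_isBounded (μ := μ) hb hφ
  exact hf.mul_bdd hφ.aestronglyMeasurable hB

end Bounded

section WeightedPoincareReal

variable {E F : Type*} [NormedAddCommGroup E] [NormedSpace ℝ E] [FiniteDimensional ℝ E]
  [MeasurableSpace E] [BorelSpace E] {μ : Measure E} [μ.IsAddHaarMeasure] {D : Set E}
  [NormedAddCommGroup F] [NormedSpace ℝ F] [CompleteSpace F]

lemma measureReal_mul_setIntegral_norm_mul_le (hD : MeasurableSet D)
    (hc : Convex ℝ D) (hb : Bornology.IsBounded D) {v : E → F} (hv : ContDiff ℝ 1 v) {s : E → ℝ}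
    (hs : Continuous s) (hs0 : ∀ x, 0 ≤ s x) :
    μ.real D * ∫ x in D, ‖v x‖ * s x ∂μ ≤
      (∫ x in D, ‖v x‖ ∂μ) * (∫ x in D, s x ∂μ) +
        diam D * ((∫ x in D, s x ^ (2 * Module.finrank ℝ E + 1) ∂μ +
          2 ^ (Module.finrank ℝ E + 1) * μ.real D) * ∫ x in D, ‖fderiv ℝ v x‖ ∂μ) := by
  have hv' : Continuous (fderiv ℝ v) := hv.continuous_fderiv one_ne_zero
  have hvc : Continuous v := hv.continuous
  have lintegral_eq : ∀ {g : E → ℝ}, Continuous g → (∀ x, 0 ≤ g x) →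
      ∫⁻ x in D, ENNReal.ofReal (g x) ∂μ = ENNReal.ofReal (∫ x in D, g x ∂μ) := fun hg hg0 =>
    (ofReal_integral_eq_lintegral_ofReal (integrableOn_of_isBounded hb hg)
      (ae_of_all _ hg0)).symm
  have key := measure_mul_setLIntegral_enorm_mul_le (μ := μ) hD hc hv
    (s := fun x => ENNReal.ofReal (s x)) (by fun_prop)
  have hμ : μ D = ENNReal.ofReal (μ.real D) :=
    (ENNReal.ofReal_toReal hb.measure_lt_top.ne).symm
  have hdiam : ediam D = ENNReal.ofReal (diam D) :=
    (ENNReal.ofReal_toReal hb.ediam_ne_top).symm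
  have hn : (2 : ℝ≥0∞) ^ (Module.finrank ℝ E + 1) =
      ENNReal.ofReal (2 ^ (Module.finrank ℝ E + 1)) := by simp [ENNReal.ofReal_pow]
  have h0 : ∀ {g : E → ℝ}, (∀ x, 0 ≤ g x) → 0 ≤ ∫ x in D, g x ∂μ := fun hg => integral_nonneg hg
  simp only [← ofReal_norm, ← ENNReal.ofReal_mul, norm_nonneg, ← ENNReal.ofReal_pow, hs0] at key
  rw [lintegral_eq (by fun_prop) fun x => mul_nonneg (norm_nonneg _) (hs0 x),
    lintegral_eq (by fun_prop) fun x => norm_nonneg _, lintegral_eq hs hs0,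
    lintegral_eq (by fun_prop) fun x => pow_nonneg (hs0 x) _,
    lintegral_eq hv'.norm fun x => norm_nonneg _, hμ, hdiam, hn,
    ← ENNReal.ofReal_mul (by positivity), ← ENNReal.ofReal_mul (h0 fun x => norm_nonneg _),
    ← ENNReal.ofReal_mul (by positivity),
    ← ENNReal.ofReal_add (h0 fun x => pow_nonneg (hs0 x) _) (by positivity),
    ← ENNReal.ofReal_mul (add_nonneg (h0 fun x => pow_nonneg (hs0 x) _) (by positivity)),
    ← ENNReal.ofReal_mul diam_nonneg, ← ENNReal.ofReal_add, ENNReal.ofReal_le_ofReal_iff] at key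
  · exact key
  all_goals
    have := h0 hs0
    have := h0 fun x => pow_nonneg (hs0 x) (2 * Module.finrank ℝ E + 1)
    have := diam_nonneg (s := D)
    positivity

end WeightedPoincareReal

/-! ### The slow truncation -/

/-- The bracket `⟨t⟩ = √(1 + t²)`, a smooth substitute for `1 + |t|`. -/
noncomputable def bracket (t : ℝ) : ℝ := √(1 + t ^ 2)

/-- The weight `⟨t⟩ ^ (1 / (2n + 1))`. In dimension `n`, its power `2n + 1`, which appears in the
weighted Poincaré inequality, is the bracket itself and hence still grows only linearly. -/
noncomputable def slowWeight (n : ℕ) (t : ℝ) : ℝ := bracket t ^ (1 / (2 * n + 1) : ℝ)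

/-- A bounded smooth increasing function. The factor `2 - (slowWeight n t)⁻¹` makes its derivative
decay no faster than `1 / (⟨t⟩ * slowWeight n t)`, against `⟨t⟩⁻³` for `t / ⟨t⟩`. -/
noncomputable def slowTruncation (n : ℕ) (t : ℝ) : ℝ := t / bracket t * (2 - (slowWeight n t)⁻¹)

lemma bracket_sq (t : ℝ) : bracket t ^ 2 = 1 + t ^ 2 := Real.sq_sqrt (by positivity)

lemma one_le_bracket (t : ℝ) : 1 ≤ bracket t := Real.one_le_sqrt.2 (by nlinarith)

lemma bracket_pos (t : ℝ) : 0 < bracket t := one_pos.trans_le (one_le_bracket t)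

lemma abs_le_bracket (t : ℝ) : |t| ≤ bracket t := Real.abs_le_sqrt (by linarith)

lemma bracket_le_one_add_abs (t : ℝ) : bracket t ≤ 1 + |t| := by
  simpa [bracket] using sqrt_one_add_norm_sq_le t

lemma contDiff_bracket : ContDiff ℝ 1 bracket :=
  ContDiff.sqrt (by fun_prop) fun t => by positivity

lemma hasDerivAt_bracket (t : ℝ) : HasDerivAt bracket (t / bracket t) t := by
  have h : HasDerivAt (fun t : ℝ => 1 + t ^ 2) (2 * t) t := by
    simpa using (hasDerivAt_pow 2 t).const_add 1
  exact (h.sqrt (by positivity)).congr_deriv (mul_div_mul_left _ _ two_ne_zero)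

section SlowTruncation

variable (n : ℕ) (t : ℝ)

lemma one_le_slowWeight : 1 ≤ slowWeight n t :=
  Real.one_le_rpow (one_le_bracket t) (by positivity)

lemma slowWeight_pos : 0 < slowWeight n t := one_pos.trans_le (one_le_slowWeight n t)

lemma slowWeight_pow : slowWeight n t ^ (2 * n + 1) = bracket t := by
  rw [slowWeight, one_div, ← Nat.cast_ofNat, ← Nat.cast_mul, ← Nat.cast_add_one,
    Real.rpow_inv_natCast_pow (bracket_pos t).le (by simp)]

lemma slowWeight_le_bracket : slowWeight n t ≤ bracket t :=
  slowWeight_pow n t ▸ le_self_pow₀ (one_le_slowWeight n t) (by simp)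

lemma contDiff_slowWeight : ContDiff ℝ 1 (slowWeight n) :=
  contDiff_bracket.rpow_const_of_ne fun t => (bracket_pos t).ne'

lemma hasDerivAt_slowWeight :
    HasDerivAt (slowWeight n) (t * slowWeight n t / ((2 * n + 1) * bracket t ^ 2)) t := by
  refine ((hasDerivAt_bracket t).rpow_const (Or.inl (bracket_pos t).ne')).congr_deriv ?_
  have := bracket_pos t
  rw [Real.rpow_sub_one this.ne', ← slowWeight]
  field_simp

lemma contDiff_slowTruncation : ContDiff ℝ 1 (slowTruncation n) :=
  (contDiff_id.div contDiff_bracket fun t => (bracket_pos t).ne').mul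
    (contDiff_const.sub ((contDiff_slowWeight n).inv fun t => (slowWeight_pos n t).ne'))

lemma hasDerivAt_slowTruncation : HasDerivAt (slowTruncation n)
    ((2 - (slowWeight n t)⁻¹ + t ^ 2 / ((2 * n + 1) * slowWeight n t)) / bracket t ^ 3) t := by
  have hr := bracket_pos t
  have hs := slowWeight_pos n t
  refine (((hasDerivAt_id t).div (hasDerivAt_bracket t) hr.ne').mul
    (((hasDerivAt_slowWeight n t).inv hs.ne').const_sub 2)).congr_deriv ?_
  simp only [id, Pi.div_apply, Pi.inv_apply]
  field_simp
  linear_combination (2 * n + 1) * (2 * slowWeight n t - 1) * bracket_sq t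

lemma abs_slowTruncation_le : |slowTruncation n t| ≤ 2 := by
  have h1 : |t / bracket t| ≤ 1 := by
    rw [abs_div, abs_of_pos (bracket_pos t)]
    exact div_le_one_of_le₀ (abs_le_bracket t) (bracket_pos t).le
  have hs := inv_le_one_of_one_le₀ (one_le_slowWeight n t)
  have hs0 := inv_pos.2 (slowWeight_pos n t)
  have h2 : |2 - (slowWeight n t)⁻¹| ≤ 2 := abs_le.2 ⟨by linarith, by linarith⟩
  calc |slowTruncation n t| = |t / bracket t| * |2 - (slowWeight n t)⁻¹| := abs_mul _ _
    _ ≤ 1 * 2 := by gcongr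
    _ = 2 := one_mul 2

lemma abs_sub_one_le_mul_slowTruncation : |t| - 1 ≤ t * slowTruncation n t := by
  have hr := bracket_pos t
  have hs := inv_le_one_of_one_le₀ (one_le_slowWeight n t)
  calc |t| - 1 ≤ bracket t - 1 := by linarith [abs_le_bracket t]
    _ ≤ bracket t - (bracket t)⁻¹ := by linarith [inv_le_one_of_one_le₀ (one_le_bracket t)]
    _ = t ^ 2 / bracket t * 1 := by
        rw [mul_one, eq_div_iff hr.ne', sub_mul, inv_mul_cancel₀ hr.ne', ← sq, bracket_sq]; ring
    _ ≤ t ^ 2 / bracket t * (2 - (slowWeight n t)⁻¹) := by gcongr; linarith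
    _ = t * slowTruncation n t := by rw [slowTruncation]; ring

lemma deriv_slowTruncation_le : deriv (slowTruncation n) t ≤ 3 := by
  have hr := bracket_pos t
  have hs := one_le_slowWeight n t
  have hs0 := inv_pos.2 (slowWeight_pos n t)
  rw [(hasDerivAt_slowTruncation n t).deriv, div_le_iff₀ (by positivity)]
  have h1 : t ^ 2 / ((2 * n + 1) * slowWeight n t) ≤ t ^ 2 :=
    div_le_self (sq_nonneg t)
      (one_le_mul_of_one_le_of_one_le (by linarith [n.cast_nonneg (α := ℝ)]) hs)
  have h2 : bracket t ^ 2 ≤ bracket t ^ 3 := pow_le_pow_right₀ (one_le_bracket t) (by norm_num)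
  nlinarith [bracket_sq t]

lemma one_le_deriv_slowTruncation_mul :
    1 ≤ deriv (slowTruncation n) t * ((2 * n + 1) * (bracket t * slowWeight n t)) := by
  have hr := bracket_pos t
  have hs := one_le_slowWeight n t
  rw [(hasDerivAt_slowTruncation n t).deriv]
  have hn : (0 : ℝ) ≤ n := n.cast_nonneg
  calc (1 : ℝ) = (1 + t ^ 2) / bracket t ^ 2 := by rw [← bracket_sq, div_self (by positivity)]
    _ ≤ ((2 * n + 1) * (2 * slowWeight n t - 1) + t ^ 2) / bracket t ^ 2 := by
        gcongr
        nlinarith [mul_nonneg hn (sub_nonneg.2 hs)]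
    _ = _ := by field_simp

lemma deriv_slowTruncation_pos : 0 < deriv (slowTruncation n) t :=
  pos_of_mul_pos_left (one_pos.trans_le (one_le_deriv_slowTruncation_mul n t))
    (by have := bracket_pos t; have := slowWeight_pos n t; positivity)

end SlowTruncation

/-! ### Convergence in `L¹` -/

lemma exists_continuous_setIntegral_norm_sub_le {α F : Type*} [TopologicalSpace α] [NormalSpace α]
    [R1Space α] [WeaklyLocallyCompactSpace α] [MeasurableSpace α] [BorelSpace α] {μ : Measure α}
    [μ.Regular] [NormedAddCommGroup F] [NormedSpace ℝ F] {D : Set α} (hD : MeasurableSet D)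
    {f : α → F} (hf : IntegrableOn f D μ) {δ : ℝ} (hδ : 0 < δ) :
    ∃ g : α → F, Continuous g ∧ ∫ x in D, ‖f x - g x‖ ∂μ ≤ δ := by
  have hf' := (integrable_indicator_iff hD).2 hf
  obtain ⟨g, -, hfg, hgc, hgi⟩ := hf'.exists_hasCompactSupport_integral_sub_le hδ
  refine ⟨g, hgc, ?_⟩
  calc ∫ x in D, ‖f x - g x‖ ∂μ = ∫ x in D, ‖D.indicator f x - g x‖ ∂μ :=
        setIntegral_congr_fun hD fun x hx => by simp only [Set.indicator_of_mem hx]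
    _ ≤ ∫ x, ‖D.indicator f x - g x‖ ∂μ :=
        setIntegral_le_integral (hf'.sub hgi).norm (ae_of_all _ fun _ => norm_nonneg _)
    _ ≤ δ := hfg

section IntegralNormSub

open Filter Topology

variable {α F : Type*} [MeasurableSpace α] {μ : Measure α} [NormedAddCommGroup F] {f : ℕ → α → F}
  {g : α → F}

lemma exists_tendsto_integral_norm_sub [NormedSpace ℝ F] [CompleteSpace F]
    (hf : ∀ n, Integrable (f n) μ) {b : ℕ → ℝ} (hb : Tendsto b atTop (𝓝 0))
    (h : ∀ n k, ∫ x, ‖f n x - f k x‖ ∂μ ≤ b n + b k) :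
    ∃ g : α → F, Integrable g μ ∧ Tendsto (fun n => ∫ x, ‖f n x - g x‖ ∂μ) atTop (𝓝 0) := by
  have hcauchy : CauchySeq fun n => (hf n).toL1 (f n) := by
    rw [Metric.cauchySeq_iff']
    intro ε hε
    obtain ⟨N, hN⟩ := eventually_atTop.1 (hb.eventually (gt_mem_nhds (half_pos hε)))
    refine ⟨N, fun n hn => ?_⟩
    rw [dist_eq_norm, ← Integrable.toL1_sub, L1.norm_of_fun_eq_integral_norm]
    calc ∫ x, ‖f n x - f N x‖ ∂μ ≤ b n + b N := h n N
      _ < ε / 2 + ε / 2 := add_lt_add (hN n hn) (hN N le_rfl)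
      _ = ε := add_halves ε
  obtain ⟨g, hg⟩ := cauchySeq_tendsto_of_complete hcauchy
  refine ⟨g, L1.integrable_coeFn g, ?_⟩
  refine (tendsto_iff_norm_sub_tendsto_zero.1 hg).congr fun n => ?_
  rw [L1.norm_eq_integral_norm]
  refine integral_congr_ae ?_
  filter_upwards [Lp.coeFn_sub ((hf n).toL1 (f n)) g, (hf n).coeFn_toL1] with x hsub hfx
  rw [hsub, Pi.sub_apply, hfx]

lemma tendsto_integral_norm_of_tendsto_integral_norm_sub (hf : ∀ n, Integrable (f n) μ)
    (hg : Integrable g μ) (h : Tendsto (fun n => ∫ x, ‖f n x - g x‖ ∂μ) atTop (𝓝 0)) :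
    Tendsto (fun n => ∫ x, ‖f n x‖ ∂μ) atTop (𝓝 (∫ x, ‖g x‖ ∂μ)) := by
  refine tendsto_iff_norm_sub_tendsto_zero.2 <|
    squeeze_zero (fun n => norm_nonneg _) (fun n => ?_) h
  rw [← integral_sub (hf n).norm hg.norm]
  exact norm_integral_le_of_norm_le ((hf n).sub hg).norm
    (ae_of_all _ fun x => abs_norm_sub_norm_le _ _)

variable {E : Type*} [NormedAddCommGroup E] [InnerProductSpace ℝ E] {G Φ : α → E}

lemma integrable_inner_of_ae_norm_le (hG : Integrable G μ) (hΦ : AEStronglyMeasurable Φ μ)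
    {B : ℝ} (hB : ∀ᵐ x ∂μ, ‖Φ x‖ ≤ B) : Integrable (fun x => inner ℝ (G x) (Φ x)) μ :=
  (hG.norm.mul_const B).mono' (hG.aestronglyMeasurable.inner hΦ) <| hB.mono fun _ hx =>
    (norm_inner_le_norm _ _).trans (by gcongr)

lemma tendsto_integral_inner_of_tendsto_integral_norm_sub {F : ℕ → α → E}
    (hF : ∀ n, Integrable (F n) μ) (hG : Integrable G μ) (hΦ : AEStronglyMeasurable Φ μ) {B : ℝ}
    (hB : ∀ᵐ x ∂μ, ‖Φ x‖ ≤ B) (h : Tendsto (fun n => ∫ x, ‖F n x - G x‖ ∂μ) atTop (𝓝 0)) :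
    Tendsto (fun n => ∫ x, inner ℝ (F n x) (Φ x) ∂μ) atTop
      (𝓝 (∫ x, inner ℝ (G x) (Φ x) ∂μ)) := by
  refine tendsto_iff_norm_sub_tendsto_zero.2 <|
    squeeze_zero (fun n => norm_nonneg _) (fun n => ?_) (by simpa using h.mul_const B)
  rw [← integral_sub (integrable_inner_of_ae_norm_le (hF n) hΦ hB)
    (integrable_inner_of_ae_norm_le hG hΦ hB), ← integral_mul_const]
  refine norm_integral_le_of_norm_le (((hF n).sub hG).norm.mul_const B) <| hB.mono fun x hx => ?_
  rw [← inner_sub_left]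
  exact (norm_inner_le_norm _ _).trans (by gcongr)

end IntegralNormSub

lemma setIntegral_mul_fderiv_eq_neg {E : Type*} [NormedAddCommGroup E] [NormedSpace ℝ E]
    [FiniteDimensional ℝ E] [MeasurableSpace E] [BorelSpace E] {μ : Measure E}
    [μ.IsAddHaarMeasure] {D : Set E} {v φ : E → ℝ} (hv : ContDiff ℝ 1 v) (hφ : ContDiff ℝ 1 φ)
    (hs : HasCompactSupport φ) (hsD : tsupport φ ⊆ D) (e : E) :
    ∫ x in D, v x * fderiv ℝ φ x e ∂μ = - ∫ x in D, fderiv ℝ v x e * φ x ∂μ := by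
  have hvd : Continuous fun x => fderiv ℝ v x e :=
    (hv.continuous_fderiv one_ne_zero).clm_apply continuous_const
  have hφd : Continuous fun x => fderiv ℝ φ x e :=
    (hφ.continuous_fderiv one_ne_zero).clm_apply continuous_const
  have hφ0 : ∀ x, x ∉ D → φ x = 0 := fun x hx =>
    image_eq_zero_of_notMem_tsupport fun h => hx (hsD h)
  have hφd0 : ∀ x, x ∉ D → fderiv ℝ φ x = 0 := fun x hx =>
    image_eq_zero_of_notMem_tsupport fun h => hx (hsD (tsupport_fderiv_subset ℝ h))
  rw [setIntegral_eq_integral_of_forall_compl_eq_zero fun x hx => by simp [hφd0 x hx],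
    setIntegral_eq_integral_of_forall_compl_eq_zero fun x hx => by simp [hφ0 x hx]]
  exact integral_mul_fderiv_eq_neg_fderiv_mul_of_integrable
    ((hvd.mul hφ.continuous).integrable_of_hasCompactSupport hs.mul_left)
    ((hv.continuous.mul hφd).integrable_of_hasCompactSupport (hs.fderiv_apply ℝ e).mul_left)
    ((hv.continuous.mul hφ.continuous).integrable_of_hasCompactSupport hs.mul_left)
    (fun x _ => hv.differentiable one_ne_zero x) (fun x _ => hφ.differentiable one_ne_zero x)

/-! ### The Neumann form on `C¹` functions -/

section Gradient

variable {E : Type*} [NormedAddCommGroup E] [InnerProductSpace ℝ E] [CompleteSpace E]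

lemma gradient_comp {v : E → ℝ} {ψ : ℝ → ℝ} {ψ' : ℝ} {x : E} (hψ : HasDerivAt ψ ψ' (v x))
    (hv : DifferentiableAt ℝ v x) : gradient (ψ ∘ v) x = ψ' • gradient v x := by
  rw [gradient, (hψ.comp_hasFDerivAt x hv.hasFDerivAt).fderiv, map_smul, gradient]

lemma gradient_add {v w : E → ℝ} {x : E} (hv : DifferentiableAt ℝ v x)
    (hw : DifferentiableAt ℝ w x) : gradient (v + w) x = gradient v x + gradient w x := by
  rw [gradient, fderiv_add hv hw, map_add, gradient, gradient]

lemma gradient_const_smul {v : E → ℝ} {x : E} (c : ℝ) (hv : DifferentiableAt ℝ v x) :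
    gradient (c • v) x = c • gradient v x := by
  rw [gradient, fderiv_const_smul hv, map_smul, gradient]

end Gradient

/-- The space of `C¹` functions, which serves both as a space of approximate solutions and as the
space of test functions. -/
def contDiffFun (E : Type*) [NormedAddCommGroup E] [NormedSpace ℝ E] : Submodule ℝ (E → ℝ) where
  carrier := {v | ContDiff ℝ 1 v}
  add_mem' hv hw := by exact ContDiff.add (Set.mem_ofPred.1 hv) (Set.mem_ofPred.1 hw)
  zero_mem' := by exact contDiff_zero_fun (𝕜 := ℝ) (n := 1)
  smul_mem' c _ hv := by exact contDiff_const.smul (Set.mem_ofPred.1 hv)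

instance (E : Type*) [NormedAddCommGroup E] [NormedSpace ℝ E] :
    CoeFun (contDiffFun E) fun _ => E → ℝ := ⟨Subtype.val⟩

namespace contDiffFun

variable {E : Type*} [NormedAddCommGroup E] [InnerProductSpace ℝ E]

lemma contDiff (v : contDiffFun E) : ContDiff ℝ 1 (v : E → ℝ) := v.2

@[fun_prop]
lemma continuous (v : contDiffFun E) : Continuous (v : E → ℝ) := (contDiff v).continuous

lemma differentiableAt (v : contDiffFun E) (x : E) : DifferentiableAt ℝ (v : E → ℝ) x :=
  (contDiff v).differentiable one_ne_zero x

/-- The gradient, as a linear map on `C¹` functions. -/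
noncomputable def grad [CompleteSpace E] : contDiffFun E →ₗ[ℝ] E → E where
  toFun v := gradient (v : E → ℝ)
  map_add' v w := funext fun x => gradient_add (differentiableAt v x) (differentiableAt w x)
  map_smul' c v := funext fun x => gradient_const_smul c (differentiableAt v x)

@[fun_prop]
lemma continuous_grad [CompleteSpace E] (v : contDiffFun E) : Continuous (grad v) :=
  (InnerProductSpace.toDual ℝ E).symm.continuous.comp
    ((contDiff v).continuous_fderiv one_ne_zero)

lemma norm_grad [CompleteSpace E] (v : contDiffFun E) (x : E) :
    ‖grad v x‖ = ‖fderiv ℝ (v : E → ℝ) x‖ :=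
  (InnerProductSpace.toDual ℝ E).symm.norm_map _

lemma inner_grad_left [CompleteSpace E] (v : contDiffFun E) (x e : E) :
    inner ℝ (grad v x) e = fderiv ℝ (v : E → ℝ) x e := inner_gradient_left

/-- The composition `ψ ∘ v`. -/
def comp (ψ : ℝ → ℝ) (hψ : ContDiff ℝ 1 ψ) (v : contDiffFun E) : contDiffFun E :=
  ⟨ψ ∘ v, hψ.comp (contDiff v)⟩

lemma comp_apply {ψ : ℝ → ℝ} (hψ : ContDiff ℝ 1 ψ) (v : contDiffFun E) (x : E) :
    comp ψ hψ v x = ψ (v x) := rfl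

lemma grad_comp [CompleteSpace E] {ψ : ℝ → ℝ} (hψ : ContDiff ℝ 1 ψ) (v : contDiffFun E) (x : E) :
    grad (comp ψ hψ v) x = deriv ψ (v x) • grad v x :=
  gradient_comp (hψ.differentiable one_ne_zero _).hasDerivAt (differentiableAt v x)

section NeumannForm

variable [FiniteDimensional ℝ E] [MeasurableSpace E] [BorelSpace E] {D : Set E}
  (hb : Bornology.IsBounded D)

/-- The bilinear form `∫_D (∇v · ∇φ + v φ)` of the Neumann problem for `-Δ + 1`. -/
noncomputable def neumannForm : contDiffFun E →ₗ[ℝ] contDiffFun E →ₗ[ℝ] ℝ :=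
  have int {g : E → ℝ} (hg : Continuous g) : IntegrableOn g D :=
    integrableOn_of_isBounded hb hg
  LinearMap.mk₂ ℝ (fun v φ => ∫ x in D, (inner ℝ (grad v x) (grad φ x) + v x * φ x))
    (fun v w φ => by
      rw [← integral_add (int (by fun_prop)) (int (by fun_prop))]
      congr 1 with x
      simp only [map_add, Submodule.coe_add, Pi.add_apply, inner_add_left]
      ring)
    (fun c v φ => by
      rw [smul_eq_mul, ← integral_const_mul]
      congr 1 with x
      simp only [map_smul, Submodule.coe_smul, Pi.smul_apply, real_inner_smul_left, smul_eq_mul]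
      ring)
    (fun v φ χ => by
      rw [← integral_add (int (by fun_prop)) (int (by fun_prop))]
      congr 1 with x
      simp only [map_add, Submodule.coe_add, Pi.add_apply, inner_add_right]
      ring)
    (fun c v φ => by
      rw [smul_eq_mul, ← integral_const_mul]
      congr 1 with x
      simp only [map_smul, Submodule.coe_smul, Pi.smul_apply, real_inner_smul_right, smul_eq_mul]
      ring)

lemma neumannForm_apply (v φ : contDiffFun E) :
    neumannForm hb v φ = ∫ x in D, (inner ℝ (grad v x) (grad φ x) + v x * φ x) := rfl

lemma neumannForm_comm (v φ : contDiffFun E) : neumannForm hb v φ = neumannForm hb φ v := by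
  simp only [neumannForm_apply, real_inner_comm, mul_comm]

lemma neumannForm_self (φ : contDiffFun E) :
    neumannForm hb φ φ = (∫ x in D, ‖grad φ x‖ ^ 2) + ∫ x in D, φ x ^ 2 := by
  rw [← integral_add (integrableOn_of_isBounded hb (by fun_prop))
    (integrableOn_of_isBounded hb (by fun_prop))]
  simp only [neumannForm_apply, real_inner_self_eq_norm_sq, sq]

lemma neumannForm_comp {ψ : ℝ → ℝ} (hψ : ContDiff ℝ 1 ψ) (v : contDiffFun E) :
    neumannForm hb v (comp ψ hψ v) =
      (∫ x in D, deriv ψ (v x) * ‖grad v x‖ ^ 2) + ∫ x in D, v x * ψ (v x) := by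
  have hψc := hψ.continuous
  rw [← integral_add (integrableOn_of_isBounded hb (by fun_prop))
    (integrableOn_of_isBounded hb (by fun_prop))]
  simp only [neumannForm_apply, grad_comp, real_inner_smul_right, real_inner_self_eq_norm_sq,
    comp_apply]

/-- The functional `φ ↦ ∫_D f φ`. -/
noncomputable def integralMul {f : E → ℝ} (hf : IntegrableOn f D) :
    contDiffFun E →ₗ[ℝ] ℝ where
  toFun φ := ∫ x in D, f x * φ x
  map_add' φ χ := by
    rw [← integral_add (integrableOn_mul_of_isBounded hb hf (by fun_prop))
      (integrableOn_mul_of_isBounded hb hf (by fun_prop))]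
    simp only [Submodule.coe_add, Pi.add_apply, mul_add]
  map_smul' c φ := by
    simp only [Submodule.coe_smul, Pi.smul_apply, smul_eq_mul, mul_left_comm _ c,
      integral_const_mul, RingHom.id_apply]

lemma integralMul_apply {f : E → ℝ} (hf : IntegrableOn f D) (φ : contDiffFun E) :
    integralMul hb hf φ = ∫ x in D, f x * φ x := rfl

end NeumannForm

/-! ### The a priori estimate -/

section APriori

variable {E : Type*} [NormedAddCommGroup E] [InnerProductSpace ℝ E] [FiniteDimensional ℝ E]
  [MeasurableSpace E] [BorelSpace E] {D : Set E}

/-- The functional `L` is bounded by `M` with respect to the norm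
`sup_D |φ| + ‖∇φ‖_{L²(D)}`. The supremum is replaced by an arbitrary upper bound `B`. -/
def IsDualBounded (D : Set E) (L : contDiffFun E →ₗ[ℝ] ℝ) (M : ℝ) : Prop :=
  ∀ (φ : contDiffFun E) (B : ℝ), 0 ≤ B → (∀ x ∈ D, |φ x| ≤ B) →
    |L φ| ≤ M * (B + √(∫ x in D, ‖grad φ x‖ ^ 2))

lemma IsDualBounded.mono {L : contDiffFun E →ₗ[ℝ] ℝ} {M M' : ℝ} (h : IsDualBounded D L M)
    (hM : M ≤ M') : IsDualBounded D L M' := fun φ B hB hφ =>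
  (h φ B hB hφ).trans (by gcongr)

lemma IsDualBounded.add {L L' : contDiffFun E →ₗ[ℝ] ℝ} {M M' : ℝ} (h : IsDualBounded D L M)
    (h' : IsDualBounded D L' M') : IsDualBounded D (L + L') (M + M') := fun φ B hB hφ =>
  calc |(L + L') φ| ≤ |L φ| + |L' φ| := abs_add_le _ _
    _ ≤ _ := add_le_add (h φ B hB hφ) (h' φ B hB hφ)
    _ = _ := (add_mul _ _ _).symm

lemma IsDualBounded.smul {L : contDiffFun E →ₗ[ℝ] ℝ} {M : ℝ} (h : IsDualBounded D L M) (c : ℝ) :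
    IsDualBounded D (c • L) (|c| * M) := fun φ B hB hφ =>
  calc |(c • L) φ| = |c| * |L φ| := abs_mul _ _
    _ ≤ |c| * (M * _) := by gcongr; exact h φ B hB hφ
    _ = _ := (mul_assoc _ _ _).symm

lemma IsDualBounded.sub {L L' : contDiffFun E →ₗ[ℝ] ℝ} {M M' : ℝ} (h : IsDualBounded D L M)
    (h' : IsDualBounded D L' M') : IsDualBounded D (L - L') (M + M') := fun φ B hB hφ =>
  calc |(L - L') φ| ≤ |L φ| + |L' φ| := abs_sub _ _
    _ ≤ _ := add_le_add (h φ B hB hφ) (h' φ B hB hφ)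
    _ = _ := (add_mul _ _ _).symm

variable (n : ℕ) (v : contDiffFun E)

/-- The energy `∫_D ψ'(v) |∇v|²` gained from testing the equation with `ψ ∘ v`, where `ψ` is
`slowTruncation n`. -/
noncomputable def slowEnergy (D : Set E) : ℝ :=
  ∫ x in D, deriv (slowTruncation n) (v x) * ‖grad v x‖ ^ 2

lemma slowEnergy_nonneg : 0 ≤ slowEnergy n v D :=
  integral_nonneg fun _ => mul_nonneg (deriv_slowTruncation_pos n _).le (sq_nonneg _)

lemma slowEnergy_add_integral_abs_le (hb : Bornology.IsBounded D) :
    slowEnergy n v D + ∫ x in D, |v x| ≤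
      volume.real D + neumannForm hb v (comp _ (contDiff_slowTruncation n) v) := by
  have hψ := (contDiff_slowTruncation n).continuous
  have int {g : E → ℝ} (hg : Continuous g) : IntegrableOn g D := integrableOn_of_isBounded hb hg
  have h : ∫ x in D, |v x| ≤ volume.real D + ∫ x in D, v x * slowTruncation n (v x) := by
    rw [← setIntegral_one_add hb.measure_lt_top.ne (int (by fun_prop))]
    refine setIntegral_mono (int (by fun_prop)) (int (by fun_prop)) fun x => ?_
    linarith [abs_sub_one_le_mul_slowTruncation n (v x)]
  rw [neumannForm_comp, ← slowEnergy]
  linarith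

lemma integral_norm_grad_comp_slowTruncation_sq_le (hb : Bornology.IsBounded D) :
    ∫ x in D, ‖grad (comp _ (contDiff_slowTruncation n) v) x‖ ^ 2 ≤ 3 * slowEnergy n v D := by
  have hψ' := (contDiff_slowTruncation n).continuous_deriv_one
  rw [slowEnergy, ← integral_const_mul]
  refine setIntegral_mono (integrableOn_of_isBounded hb (by fun_prop))
    (integrableOn_of_isBounded hb (by fun_prop)) fun x => ?_
  have h0 := deriv_slowTruncation_pos n (v x)
  simp only [grad_comp, norm_smul, Real.norm_of_nonneg h0.le, mul_pow, sq (deriv _ _), mul_assoc]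
  gcongr
  exact deriv_slowTruncation_le n _

lemma slowEnergy_add_two_mul_integral_abs_le (hb : Bornology.IsBounded D)
    (hv : IsDualBounded D (neumannForm hb v) 1) :
    slowEnergy n v D + 2 * ∫ x in D, |v x| ≤ 2 * volume.real D + 7 := by
  set ψv := comp _ (contDiff_slowTruncation n) v
  have hdual : neumannForm hb v ψv ≤ 2 + √(3 * slowEnergy n v D) :=
    calc neumannForm hb v ψv ≤ 1 * (2 + √(∫ x in D, ‖grad ψv x‖ ^ 2)) :=
          (le_abs_self _).trans (hv ψv 2 zero_le_two fun _ _ => abs_slowTruncation_le n _)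
      _ ≤ 2 + √(3 * slowEnergy n v D) := by
          rw [one_mul]
          gcongr
          exact integral_norm_grad_comp_slowTruncation_sq_le n v hb
  have hsqrt : √(3 * slowEnergy n v D) ≤ (slowEnergy n v D + 3) / 2 :=
    Real.sqrt_le_iff.2 ⟨by linarith [slowEnergy_nonneg n v (D := D)],
      by nlinarith [sq_nonneg (slowEnergy n v D - 3)]⟩
  linarith [slowEnergy_add_integral_abs_le n v hb]

lemma integral_slowWeight_le (hb : Bornology.IsBounded D) :
    ∫ x in D, slowWeight n (v x) ≤ volume.real D + ∫ x in D, |v x| := by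
  have hs := (contDiff_slowWeight n).continuous
  rw [← setIntegral_one_add hb.measure_lt_top.ne (integrableOn_of_isBounded hb (by fun_prop))]
  exact setIntegral_mono (integrableOn_of_isBounded hb (by fun_prop))
    (integrableOn_of_isBounded hb (by fun_prop))
    fun x => (slowWeight_le_bracket n _).trans (bracket_le_one_add_abs _)

lemma integral_slowWeight_pow_le (hb : Bornology.IsBounded D) :
    ∫ x in D, slowWeight n (v x) ^ (2 * n + 1) ≤ volume.real D + ∫ x in D, |v x| := by
  have hr := contDiff_bracket.continuous
  simp only [slowWeight_pow]
  rw [← setIntegral_one_add hb.measure_lt_top.ne (integrableOn_of_isBounded hb (by fun_prop))]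
  exact setIntegral_mono (integrableOn_of_isBounded hb (by fun_prop))
    (integrableOn_of_isBounded hb (by fun_prop)) fun x => bracket_le_one_add_abs _

lemma measureReal_mul_integral_abs_mul_slowWeight_le (hD : MeasurableSet D) (hc : Convex ℝ D)
    (hb : Bornology.IsBounded D) {n : ℕ} (hn : Module.finrank ℝ E = n) {N : ℝ}
    (hN : ∫ x in D, |v x| ≤ N) :
    volume.real D * ∫ x in D, |v x| * slowWeight n (v x) ≤ N * (volume.real D + N) +
      diam D * ((volume.real D + N + 2 ^ (n + 1) * volume.real D) * ∫ x in D, ‖grad v x‖) := by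
  subst hn
  set n := Module.finrank ℝ E
  have hs := (contDiff_slowWeight n).continuous
  have h := measureReal_mul_setIntegral_norm_mul_le (μ := volume) hD hc hb (contDiff v)
    (s := fun x => slowWeight n (v x)) (by fun_prop) fun x => (slowWeight_pos n _).le
  simp only [← norm_grad, Real.norm_eq_abs] at h
  have hN0 : 0 ≤ ∫ x in D, |v x| := integral_nonneg fun x => abs_nonneg _
  refine h.trans ?_
  gcongr
  · exact integral_nonneg fun x => (slowWeight_pos n _).le
  · linarith
  · exact (integral_slowWeight_le n v hb).trans (by gcongr)
  · exact (integral_slowWeight_pow_le n v hb).trans (by gcongr)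

lemma two_mul_le_of_one_le_mul {l p w : ℝ} (hl : 0 < l) (hp : 0 < p) (hpw : 1 ≤ p * w) (h : ℝ) :
    2 * h ≤ l * (p * h ^ 2) + w / l := by
  have h1 : (l * p)⁻¹ ≤ w / l := by
    rw [inv_le_iff_one_le_mul₀ (by positivity)]
    field_simp
    linarith
  have h2 : 0 ≤ (l * p * h - 1) ^ 2 / (l * p) := by positivity
  have h3 : (l * p * h - 1) ^ 2 / (l * p) = l * (p * h ^ 2) - 2 * h + (l * p)⁻¹ := by
    field_simp
    ring
  linarith

lemma two_mul_integral_norm_grad_le (hb : Bornology.IsBounded D) {l : ℝ} (hl : 0 < l) :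
    2 * ∫ x in D, ‖grad v x‖ ≤ l * slowEnergy n v D + (2 * n + 1) / l *
      ((∫ x in D, slowWeight n (v x)) + ∫ x in D, |v x| * slowWeight n (v x)) := by
  have hs := (contDiff_slowWeight n).continuous
  have hψ' := (contDiff_slowTruncation n).continuous_deriv_one
  have int {g : E → ℝ} (hg : Continuous g) : IntegrableOn g D := integrableOn_of_isBounded hb hg
  rw [← integral_add (int (by fun_prop)) (int (by fun_prop)), slowEnergy, ← integral_const_mul,
    ← integral_const_mul, ← integral_const_mul,
    ← integral_add (int (by fun_prop)) (int (by fun_prop))]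
  refine setIntegral_mono (int (by fun_prop)) (int (by fun_prop)) fun x => ?_
  have hw := slowWeight_pos n (v x)
  calc 2 * ‖grad v x‖
      ≤ l * (deriv (slowTruncation n) (v x) * ‖grad v x‖ ^ 2) +
        (2 * n + 1) * (bracket (v x) * slowWeight n (v x)) / l :=
        two_mul_le_of_one_le_mul hl (deriv_slowTruncation_pos n _)
          (one_le_deriv_slowTruncation_mul n _) _
    _ ≤ l * (deriv (slowTruncation n) (v x) * ‖grad v x‖ ^ 2) +
        (2 * n + 1) * ((1 + |v x|) * slowWeight n (v x)) / l := by
        gcongr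
        exact bracket_le_one_add_abs _
    _ = _ := by ring

lemma integral_abs_mul_slowWeight_le (hb : Bornology.IsBounded D) (hD : MeasurableSet D)
    (hc : Convex ℝ D) {m d N : ℝ} (hm : 0 < m) (hvol : volume.real D = m) (hd : diam D ≤ d)
    (hN : ∫ x in D, |v x| ≤ N) :
    ∫ x in D, |v x| * slowWeight (Module.finrank ℝ E) (v x) ≤ N * (m + N) / m +
      d * (m + N + 2 ^ (Module.finrank ℝ E + 1) * m) / m * ∫ x in D, ‖grad v x‖ := by
  have hN0 : 0 ≤ N := (integral_nonneg fun x => abs_nonneg (v x)).trans hN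
  have h := measureReal_mul_integral_abs_mul_slowWeight_le v hD hc hb rfl hN
  rw [hvol, ← mul_assoc (diam D), ← le_div_iff₀' hm, add_div, mul_div_right_comm (diam D * _)] at h
  exact h.trans (by gcongr)

lemma le_add_of_forall_two_mul_le {G I a b c : ℝ} (hc : 0 < c) (ha : 0 ≤ a) (hb : 0 ≤ b)
    (hG : 0 ≤ G) (h : ∀ l > 0, 2 * G ≤ l * I + c / l * (a + b * G)) :
    G ≤ c * (b + 1) * I + a := by
  have hl := h (c * (b + 1)) (by positivity)
  have habs : c / (c * (b + 1)) * (a + b * G) ≤ a + G := by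
    rw [div_mul_cancel_left₀ hc.ne', inv_mul_le_iff₀ (by positivity)]
    nlinarith [mul_nonneg hb ha]
  linarith

lemma exists_integral_abs_add_integral_norm_grad_le_one {m d : ℝ} (hm : 0 < m) (hd : 0 ≤ d) :
    ∃ C > 0, ∀ (D : Set E) (hb : Bornology.IsBounded D), MeasurableSet D → Convex ℝ D →
      diam D ≤ d → volume.real D = m → ∀ v : contDiffFun E,
      IsDualBounded D (neumannForm hb v) 1 →
      (∫ x in D, |v x|) + ∫ x in D, ‖grad v x‖ ≤ C := by
  set n := Module.finrank ℝ E
  set K : ℝ := 2 * m + 7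
  set a : ℝ := m + K + K * (m + K) / m
  set b : ℝ := d * (m + K + 2 ^ (n + 1) * m) / m
  refine ⟨K + ((2 * n + 1) * (b + 1) * K + a), by positivity,
    fun D hb hD hc hdiam hvol v hv => ?_⟩
  have henergy := slowEnergy_add_two_mul_integral_abs_le n v hb hv
  have hI := slowEnergy_nonneg n v (D := D)
  have hN : 0 ≤ ∫ x in D, |v x| := integral_nonneg fun x => abs_nonneg _
  have hG : 0 ≤ ∫ x in D, ‖grad v x‖ := integral_nonneg fun x => norm_nonneg _
  rw [hvol] at henergy
  have hNK : ∫ x in D, |v x| ≤ K := by linarith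
  have hs := integral_slowWeight_le n v hb
  rw [hvol] at hs
  have hvs := integral_abs_mul_slowWeight_le v hb hD hc hm hvol hdiam hNK
  have hgrad : ∫ x in D, ‖grad v x‖ ≤ (2 * n + 1) * (b + 1) * slowEnergy n v D + a := by
    have hsum : (∫ x in D, slowWeight n (v x)) + ∫ x in D, |v x| * slowWeight n (v x) ≤
        a + b * ∫ x in D, ‖grad v x‖ := by
      linear_combination hs + hvs + hNK
    exact le_add_of_forall_two_mul_le (by positivity) (by positivity) (by positivity) hG
      fun l hl => (two_mul_integral_norm_grad_le n v hb hl).trans (by gcongr)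
  calc (∫ x in D, |v x|) + ∫ x in D, ‖grad v x‖
      ≤ K + ((2 * n + 1) * (b + 1) * slowEnergy n v D + a) := add_le_add hNK hgrad
    _ ≤ K + ((2 * n + 1) * (b + 1) * K + a) := by
      gcongr
      linarith

lemma exists_integral_abs_add_integral_norm_grad_le {m d : ℝ} (hm : 0 < m) (hd : 0 ≤ d) :
    ∃ C > 0, ∀ (D : Set E) (hb : Bornology.IsBounded D), MeasurableSet D → Convex ℝ D →
      diam D ≤ d → volume.real D = m → ∀ (v : contDiffFun E), ∀ M > 0,
      IsDualBounded D (neumannForm hb v) M →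
      (∫ x in D, |v x|) + ∫ x in D, ‖grad v x‖ ≤ C * M := by
  obtain ⟨C, hC, h⟩ := exists_integral_abs_add_integral_norm_grad_le_one (E := E) hm hd
  refine ⟨C, hC, fun D hb hD hc hdiam hvol v M hM hv => ?_⟩
  have hMv : IsDualBounded D (neumannForm hb (M⁻¹ • v)) 1 := by
    simpa [abs_of_pos hM, hM.ne'] using hv.smul M⁻¹
  have hC' := h D hb hD hc hdiam hvol _ hMv
  simp only [map_smul, Submodule.coe_smul, Pi.smul_apply, norm_smul, smul_eq_mul, abs_mul,
    integral_const_mul, Real.norm_eq_abs, abs_of_pos (inv_pos.2 hM), ← mul_add] at hC'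
  rwa [inv_mul_le_iff₀ hM, mul_comm] at hC'

end APriori

/-! ### Approximate solutions -/

section AlmostSolution

lemma exists_forall_sub_sq_le {V : Type*} [AddCommGroup V] [Module ℝ V] {a : V →ₗ[ℝ] V →ₗ[ℝ] ℝ}
    (ha : ∀ v w, a v w = a w v) {ℓ : V →ₗ[ℝ] ℝ} {c : ℝ} (hc : ∀ v, c ≤ a v v - 2 * ℓ v) {η : ℝ}
    (hη : 0 < η) : ∃ v, ∀ φ, (a v φ - ℓ φ) ^ 2 ≤ η * a φ φ := by
  set J : V → ℝ := fun v => a v v - 2 * ℓ v with hJ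
  have hbdd : BddBelow (Set.range J) := ⟨c, Set.forall_mem_range.2 hc⟩
  obtain ⟨v, hv⟩ : ∃ v, J v < (⨅ w, J w) + η :=
    exists_lt_of_ciInf_lt (lt_add_of_pos_right _ hη)
  refine ⟨v, fun φ => ?_⟩
  have hquad (t : ℝ) : 0 ≤ a φ φ * (t * t) + 2 * (a v φ - ℓ φ) * t + η := by
    have hvt : J (v + t • φ) = J v + (a φ φ * (t * t) + 2 * (a v φ - ℓ φ) * t) := by
      simp only [hJ, map_add, map_smul, LinearMap.add_apply, LinearMap.smul_apply, smul_eq_mul,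
        ha φ v]
      ring
    linarith [ciInf_le hbdd (v + t • φ)]
  have hdiscrim := discrim_le_zero hquad
  rw [discrim] at hdiscrim
  linarith

variable {E : Type*} [NormedAddCommGroup E] [InnerProductSpace ℝ E] [FiniteDimensional ℝ E]
  [MeasurableSpace E] [BorelSpace E] {D : Set E} (hb : Bornology.IsBounded D)

lemma isDualBounded_of_sq_le {L : contDiffFun E →ₗ[ℝ] ℝ} {η M : ℝ} (hη : 0 ≤ η) (hM : 0 ≤ M)
    (hηM : η * (1 + volume.real D) ≤ M ^ 2) (h : ∀ φ, L φ ^ 2 ≤ η * neumannForm hb φ φ) :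
    IsDualBounded D L M := by
  intro φ B hB hφ
  have hG : 0 ≤ ∫ x in D, ‖grad φ x‖ ^ 2 := integral_nonneg fun x => sq_nonneg _
  set Q := √(∫ x in D, ‖grad φ x‖ ^ 2) with hQ
  have hφ2 : ∫ x in D, φ x ^ 2 ≤ B ^ 2 * volume.real D := by
    refine (Real.le_norm_self _).trans
      (norm_setIntegral_le_of_norm_le_const hb.measure_lt_top fun x hx => ?_)
    rw [norm_pow]
    exact pow_le_pow_left₀ (norm_nonneg _) (hφ x hx) 2
  refine abs_le_of_sq_le_sq ?_ (by positivity)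
  calc L φ ^ 2 ≤ η * neumannForm hb φ φ := h φ
    _ ≤ η * (Q ^ 2 + B ^ 2 * volume.real D) := by
      rw [neumannForm_self, hQ, Real.sq_sqrt hG]
      gcongr
    _ ≤ η * ((1 + volume.real D) * (B + Q) ^ 2) := by
      gcongr
      have hm : 0 ≤ volume.real D := measureReal_nonneg
      have hQ0 : 0 ≤ Q := Real.sqrt_nonneg _
      nlinarith [mul_nonneg hB hQ0, mul_nonneg hm (mul_nonneg hB hQ0), mul_nonneg hm (sq_nonneg Q),
        sq_nonneg B]
    _ ≤ M ^ 2 * (B + Q) ^ 2 := by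
      rw [← mul_assoc]
      gcongr
    _ = (M * (B + Q)) ^ 2 := (mul_pow _ _ _).symm

lemma integralMul_sub {f g : E → ℝ} (hf : IntegrableOn f D) (hg : IntegrableOn g D) :
    integralMul hb hf - integralMul hb hg = integralMul hb (hf.sub hg) := by
  ext φ
  rw [LinearMap.sub_apply]
  simp only [integralMul_apply, Pi.sub_apply, sub_mul]
  rw [integral_sub (integrableOn_mul_of_isBounded hb hf (by fun_prop))
    (integrableOn_mul_of_isBounded hb hg (by fun_prop))]

lemma isDualBounded_integralMul (hD : MeasurableSet D) {f : E → ℝ} (hf : IntegrableOn f D) :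
    IsDualBounded D (integralMul hb hf) (∫ x in D, |f x|) := by
  intro φ B _ hφ
  have hfB : |∫ x in D, f x * φ x| ≤ ∫ x in D, |f x| * B := by
    rw [← Real.norm_eq_abs]
    refine norm_integral_le_of_norm_le (hf.norm.mul_const B) <|
      (ae_restrict_mem hD).mono fun x hx => ?_
    rw [norm_mul]
    exact mul_le_mul_of_nonneg_left (hφ x hx) (norm_nonneg _)
  refine hfB.trans ?_
  rw [integral_mul_const]
  gcongr
  exact le_add_of_nonneg_right (Real.sqrt_nonneg _)

lemma exists_isDualBounded_sub_of_continuous {g : E → ℝ} (hg : Continuous g) {δ : ℝ}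
    (hδ : 0 < δ) : ∃ v, IsDualBounded D
      (neumannForm hb v - integralMul hb (integrableOn_of_isBounded hb hg)) δ := by
  have int {g : E → ℝ} (hg : Continuous g) : IntegrableOn g D := integrableOn_of_isBounded hb hg
  have hbelow (v : contDiffFun E) :
      ∫ x in D, -g x ^ 2 ≤ neumannForm hb v v - 2 * integralMul hb (int hg) v := calc
    ∫ x in D, -g x ^ 2 ≤ ∫ x in D, (v x ^ 2 - 2 * (g x * v x)) :=
        setIntegral_mono (int (by fun_prop)) (int (by fun_prop)) fun x => by
          nlinarith [sq_nonneg (v x - g x)]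
    _ = (∫ x in D, v x ^ 2) - 2 * ∫ x in D, g x * v x := by
        rw [integral_sub (int (by fun_prop)) (int (by fun_prop)), integral_const_mul]
    _ ≤ _ := by
        have hG : 0 ≤ ∫ x in D, ‖grad v x‖ ^ 2 := integral_nonneg fun x => sq_nonneg _
        rw [neumannForm_self, integralMul_apply]
        linarith
  obtain ⟨v, hv⟩ := exists_forall_sub_sq_le (neumannForm_comm hb) hbelow
    (η := δ ^ 2 / (1 + volume.real D)) (by positivity)
  exact ⟨v, isDualBounded_of_sq_le hb (by positivity) hδ.le
    (div_mul_cancel₀ _ (by positivity)).le hv⟩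

lemma exists_isDualBounded_sub (hD : MeasurableSet D) {f : E → ℝ} (hf : IntegrableOn f D) {δ : ℝ}
    (hδ : 0 < δ) : ∃ v, IsDualBounded D (neumannForm hb v - integralMul hb hf) δ := by
  obtain ⟨g, hg, hgf⟩ := exists_continuous_setIntegral_norm_sub_le hD hf (half_pos hδ)
  have hgi := integrableOn_of_isBounded (μ := volume) hb hg
  obtain ⟨v, hv⟩ := exists_isDualBounded_sub_of_continuous hb hg (half_pos hδ)
  refine ⟨v, ?_⟩
  have hgf' : ∫ x in D, |(g - f) x| ≤ δ / 2 := by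
    simpa only [Pi.sub_apply, abs_sub_comm, Real.norm_eq_abs] using hgf
  have h := hv.add ((isDualBounded_integralMul hb hD (hgi.sub hf)).mono hgf')
  rwa [← integralMul_sub hb hgi hf, sub_add_sub_cancel, add_halves] at h

end AlmostSolution

/-! ### Passage to the limit -/

section Limit

open Filter Topology

variable {E : Type*} [NormedAddCommGroup E] [InnerProductSpace ℝ E] [FiniteDimensional ℝ E]
  [MeasurableSpace E] [BorelSpace E] {D : Set E} {f u : E → ℝ} {U : E → E} {v : ℕ → contDiffFun E}

/-- `U` is the weak gradient of `u` on the open set `D`. -/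
def HasWeakGradient (D : Set E) (u : E → ℝ) (U : E → E) : Prop :=
  ∀ φ : contDiffFun E, HasCompactSupport (φ : E → ℝ) → tsupport (φ : E → ℝ) ⊆ D → ∀ e : E,
    ∫ x in D, u x * fderiv ℝ (φ : E → ℝ) x e = - ∫ x in D, inner ℝ (U x) e * φ x

/-- `u ∈ W^{1,1}(D)`, with weak gradient `U`, is a weak solution of `-Δu + u = f` in `D`,
`∂u/∂n = 0` on `∂D`. Test functions are `C¹` up to the boundary, which encodes the boundary
condition. -/
structure IsNeumannSolution (D : Set E) (f u : E → ℝ) (U : E → E) : Prop where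
  integrableOn : IntegrableOn u D
  integrableOn_gradient : IntegrableOn U D
  hasWeakGradient : HasWeakGradient D u U
  integral_eq : ∀ φ : contDiffFun E,
    ∫ x in D, (inner ℝ (U x) (grad φ x) + u x * φ x) = ∫ x in D, f x * φ x

/-- The `C¹` functions `v n` converge in `W^{1,1}(D)`: they tend to `u` and their gradients
to `U` in `L¹(D)`. -/
structure TendstoW11 (D : Set E) (v : ℕ → contDiffFun E) (u : E → ℝ) (U : E → E) : Prop where
  integrableOn : IntegrableOn u D
  integrableOn_gradient : IntegrableOn U D
  tendsto : Tendsto (fun n => ∫ x in D, ‖v n x - u x‖) atTop (𝓝 0)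
  tendsto_gradient : Tendsto (fun n => ∫ x in D, ‖grad (v n) x - U x‖) atTop (𝓝 0)

lemma exists_tendstoW11 (hb : Bornology.IsBounded D) {b : ℕ → ℝ} (hlim : Tendsto b atTop (𝓝 0))
    (h : ∀ n k, (∫ x in D, |(v n - v k) x|) + ∫ x in D, ‖grad (v n - v k) x‖ ≤ b n + b k) :
    ∃ u U, TendstoW11 D v u U := by
  have hnorm (n k) : 0 ≤ ∫ x in D, |(v n - v k) x| := integral_nonneg fun x => abs_nonneg _
  have hgrad (n k) : 0 ≤ ∫ x in D, ‖grad (v n - v k) x‖ := integral_nonneg fun x => norm_nonneg _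
  obtain ⟨u, hu, hulim⟩ := exists_tendsto_integral_norm_sub
    (fun n => integrableOn_of_isBounded hb (continuous (v n))) hlim
    fun n k => (le_add_of_nonneg_right (hgrad n k)).trans (h n k)
  obtain ⟨U, hU, hUlim⟩ := exists_tendsto_integral_norm_sub
    (fun n => integrableOn_of_isBounded hb (continuous_grad (v n))) hlim fun n k => by
      simpa only [map_sub, Pi.sub_apply] using (le_add_of_nonneg_left (hnorm n k)).trans (h n k)
  exact ⟨u, U, hu, hU, hulim, hUlim⟩

namespace TendstoW11

lemma integral_norm_add_le (h : TendstoW11 D v u U) (hb : Bornology.IsBounded D) {c : ℕ → ℝ}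
    {C : ℝ} (hc : Tendsto c atTop (𝓝 C))
    (hvc : ∀ n, (∫ x in D, |v n x|) + ∫ x in D, ‖grad (v n) x‖ ≤ c n) :
    (∫ x in D, |u x|) + ∫ x in D, ‖U x‖ ≤ C :=
  le_of_tendsto_of_tendsto'
    ((tendsto_integral_norm_of_tendsto_integral_norm_sub
      (fun n => integrableOn_of_isBounded hb (continuous (v n))) h.integrableOn h.tendsto).add
      (tendsto_integral_norm_of_tendsto_integral_norm_sub
        (fun n => integrableOn_of_isBounded hb (continuous_grad (v n))) h.integrableOn_gradient
        h.tendsto_gradient)) hc hvc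

lemma tendsto_integral_mul (h : TendstoW11 D v u U) (hb : Bornology.IsBounded D) {φ : E → ℝ}
    (hφ : Continuous φ) :
    Tendsto (fun n => ∫ x in D, v n x * φ x) atTop (𝓝 (∫ x in D, u x * φ x)) := by
  obtain ⟨B, hB⟩ := exists_ae_norm_le_of_isBounded (μ := volume) hb hφ
  simpa [mul_comm] using tendsto_integral_inner_of_tendsto_integral_norm_sub
    (fun n => integrableOn_of_isBounded hb (continuous (v n))) h.integrableOn
    hφ.aestronglyMeasurable hB h.tendsto

lemma tendsto_integral_inner (h : TendstoW11 D v u U) (hb : Bornology.IsBounded D) {Φ : E → E}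
    (hΦ : Continuous Φ) :
    Tendsto (fun n => ∫ x in D, inner ℝ (grad (v n) x) (Φ x)) atTop
      (𝓝 (∫ x in D, inner ℝ (U x) (Φ x))) := by
  obtain ⟨B, hB⟩ := exists_ae_norm_le_of_isBounded (μ := volume) hb hΦ
  exact tendsto_integral_inner_of_tendsto_integral_norm_sub
    (fun n => integrableOn_of_isBounded hb (continuous_grad (v n))) h.integrableOn_gradient
    hΦ.aestronglyMeasurable hB h.tendsto_gradient

lemma hasWeakGradient (h : TendstoW11 D v u U) (hb : Bornology.IsBounded D) :
    HasWeakGradient D u U := by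
  intro φ hs hsD e
  have hφe : Continuous fun x => fderiv ℝ (φ : E → ℝ) x e :=
    ((contDiff φ).continuous_fderiv one_ne_zero).clm_apply continuous_const
  have hlim := h.tendsto_integral_inner hb (Φ := fun x => φ x • e) (by fun_prop)
  simp only [inner_smul_right, mul_comm (φ _)] at hlim
  refine tendsto_nhds_unique (h.tendsto_integral_mul hb hφe) (hlim.neg.congr fun n => ?_)
  simp only [setIntegral_mul_fderiv_eq_neg (contDiff (v n)) (contDiff φ) hs hsD,
    inner_grad_left]

lemma tendsto_neumannForm (h : TendstoW11 D v u U) (hb : Bornology.IsBounded D)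
    (φ : contDiffFun E) : Tendsto (fun n => neumannForm hb (v n) φ) atTop
      (𝓝 (∫ x in D, (inner ℝ (U x) (grad φ x) + u x * φ x))) := by
  obtain ⟨B, hB⟩ := exists_ae_norm_le_of_isBounded (μ := volume) hb (continuous_grad φ)
  rw [integral_add (integrable_inner_of_ae_norm_le h.integrableOn_gradient
    (continuous_grad φ).aestronglyMeasurable hB)
    (integrableOn_mul_of_isBounded hb h.integrableOn (continuous φ))]
  refine ((h.tendsto_integral_inner hb (continuous_grad φ)).add
    (h.tendsto_integral_mul hb (continuous φ))).congr fun n => ?_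
  rw [neumannForm_apply, integral_add (integrableOn_of_isBounded hb (by fun_prop))
    (integrableOn_of_isBounded hb (by fun_prop))]

lemma isNeumannSolution (h : TendstoW11 D v u U) (hb : Bornology.IsBounded D)
    (hf : IntegrableOn f D) {δ : ℕ → ℝ} (hδ : Tendsto δ atTop (𝓝 0))
    (hv : ∀ n, IsDualBounded D (neumannForm hb (v n) - integralMul hb hf) (δ n)) :
    IsNeumannSolution D f u U where
  integrableOn := h.integrableOn
  integrableOn_gradient := h.integrableOn_gradient
  hasWeakGradient := h.hasWeakGradient hb
  integral_eq φ := by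
    obtain ⟨B, hB⟩ := hb.isCompact_closure.exists_bound_of_continuousOn (continuous φ).continuousOn
    refine tendsto_nhds_unique (h.tendsto_neumannForm hb φ) ?_
    rw [tendsto_iff_norm_sub_tendsto_zero]
    refine squeeze_zero (fun n => norm_nonneg _) (fun n => hv n φ |B| (abs_nonneg B) fun x hx =>
      (hB x (subset_closure hx)).trans (le_abs_self B)) ?_
    simpa using hδ.mul_const (|B| + √(∫ x in D, ‖grad φ x‖ ^ 2))

end TendstoW11

end Limit

end contDiffFun

open contDiffFun

theorem stmt4_general {E : Type*} [NormedAddCommGroup E] [InnerProductSpace ℝ E]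
    [FiniteDimensional ℝ E] [MeasurableSpace E] [BorelSpace E] {m d : ℝ} (hm : 0 < m)
    (hd : 0 ≤ d) :
    ∃ C > 0, ∀ D : Set E, MeasurableSet D → Convex ℝ D → Bornology.IsBounded D → diam D ≤ d →
      volume.real D = m → ∀ f : E → ℝ, IntegrableOn f D →
      ∃ u U, IsNeumannSolution D f u U ∧
        (∫ x in D, |u x|) + ∫ x in D, ‖U x‖ ≤ C * ∫ x in D, |f x| := by
  obtain ⟨C, hC, hapriori⟩ := exists_integral_abs_add_integral_norm_grad_le (E := E) hm hd
  refine ⟨C, hC, fun D hD hc hb hdiam hvol f hf => ?_⟩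
  have hbound := hapriori D hb hD hc hdiam hvol
  set δ : ℕ → ℝ := fun n => 1 / (n + 1)
  have hδ : Filter.Tendsto δ Filter.atTop (nhds 0) := tendsto_one_div_add_atTop_nhds_zero_nat
  have hδ0 : ∀ n, 0 < δ n := fun n => Nat.one_div_pos_of_nat
  choose v hv using fun n => exists_isDualBounded_sub hb hD hf (hδ0 n)
  have hcauchy : ∀ n k, (∫ x in D, |(v n - v k) x|) + ∫ x in D, ‖grad (v n - v k) x‖ ≤
      C * δ n + C * δ k := fun n k => by
    rw [← mul_add]
    refine hbound _ _ (add_pos (hδ0 n) (hδ0 k)) ?_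
    rw [map_sub, ← sub_sub_sub_cancel_right _ _ (integralMul hb hf)]
    exact (hv n).sub (hv k)
  have hsol : ∀ n, (∫ x in D, |v n x|) + ∫ x in D, ‖grad (v n) x‖ ≤
      C * (δ n + ∫ x in D, |f x|) := fun n => by
    refine hbound _ _ (add_pos_of_pos_of_nonneg (hδ0 n) (integral_nonneg fun x => abs_nonneg _)) ?_
    simpa using (hv n).add (isDualBounded_integralMul hb hD hf)
  obtain ⟨u, U, huU⟩ := exists_tendstoW11 hb (by simpa using hδ.const_mul C) hcauchy
  exact ⟨u, U, huU.isNeumannSolution hb hf hδ hv, huU.integral_norm_add_le hb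
    (by simpa using (hδ.add_const (∫ x in D, |f x|)).const_mul C) hsol⟩

lemma exists_isNeumannSolution_ball {E : Type*} [NormedAddCommGroup E] [InnerProductSpace ℝ E]
    [FiniteDimensional ℝ E] [MeasurableSpace E] [BorelSpace E] {R : ℝ} (hR : 0 < R) :
    ∃ C > 0, ∀ (x₀ : E) (f : E → ℝ), IntegrableOn f (ball x₀ R) →
      ∃ u U, IsNeumannSolution (ball x₀ R) f u U ∧
        (∫ x in ball x₀ R, |u x|) + ∫ x in ball x₀ R, ‖U x‖ ≤ C * ∫ x in ball x₀ R, |f x| := by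
  have hm : 0 < volume.real (ball (0 : E) R) :=
    ENNReal.toReal_pos (measure_ball_pos _ _ hR).ne' measure_ball_lt_top.ne
  obtain ⟨C, hC, h⟩ := stmt4_general (E := E) hm (mul_nonneg zero_le_two hR.le)
  exact ⟨C, hC, fun x₀ => h (ball x₀ R) measurableSet_ball (convex_ball _ _) isBounded_ball
    (diam_ball hR.le) (Measure.addHaar_real_ball_center _ _ _)⟩

section Coordinates

lemma toReal_eLpNorm_one_ofLp_le {α ι : Type*} [MeasurableSpace α] [Fintype ι] {μ : Measure α}
    {U : α → EuclideanSpace ℝ ι} (hU : Integrable U μ) :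
    (eLpNorm (fun x i => U x i) 1 μ).toReal ≤ ∫ x, ‖U x‖ ∂μ := by
  rw [← lpNorm_one_eq_integral_norm hU.aestronglyMeasurable,
    ← toReal_eLpNorm hU.aestronglyMeasurable]
  exact ENNReal.toReal_mono (memLp_one_iff_integrable.2 hU).eLpNorm_ne_top <| eLpNorm_mono fun x =>
    (pi_norm_le_iff_of_nonneg (norm_nonneg _)).2 fun i => PiLp.norm_apply_le (U x) i

lemma contDiffFun.HasWeakGradient.isWeakGrad {D : Set (EuclideanSpace ℝ (Fin 2))}
    {u : EuclideanSpace ℝ (Fin 2) → ℝ} {U : EuclideanSpace ℝ (Fin 2) → EuclideanSpace ℝ (Fin 2)}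
    (h : HasWeakGradient D u U) : IsWeakGrad D u fun x i => U x i := by
  intro φ hφ hs hsD i
  have hφ1 : ContDiff ℝ 1 φ := hφ.of_le (by exact_mod_cast le_top)
  simpa [EuclideanSpace.inner_single_right] using
    h ⟨φ, hφ1⟩ hs hsD (EuclideanSpace.single i 1)

lemma contDiffFun.grad_ofLp {ι : Type*} [Fintype ι] [DecidableEq ι]
    (φ : contDiffFun (EuclideanSpace ℝ ι)) (x : EuclideanSpace ℝ ι) (i : ι) :
    grad φ x i = fderiv ℝ (φ : EuclideanSpace ℝ ι → ℝ) x (EuclideanSpace.single i 1) := by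
  simp [← inner_grad_left, EuclideanSpace.inner_single_right]

lemma contDiffFun.IsNeumannSolution.integral_sum_eq {ι : Type*} [Fintype ι] [DecidableEq ι]
    {D : Set (EuclideanSpace ℝ ι)} {f u : EuclideanSpace ℝ ι → ℝ}
    {U : EuclideanSpace ℝ ι → EuclideanSpace ℝ ι} (h : IsNeumannSolution D f u U)
    {φ : EuclideanSpace ℝ ι → ℝ} (hφ : ContDiff ℝ 1 φ) :
    ∫ x in D, ((∑ i, U x i * fderiv ℝ φ x (EuclideanSpace.single i (1 : ℝ))) + u x * φ x) =
      ∫ x in D, f x * φ x := by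
  rw [← h.integral_eq ⟨φ, hφ⟩]
  simp only [PiLp.inner_apply, grad_ofLp, RCLike.inner_apply, conj_trivial, mul_comm]

end Coordinates

/-- `L¹` theory for the Neumann problem on the disk `D = B_R(x₀) ⊂ ℝ²`: for every
`f ∈ L¹(D)`, the problem `−Δu + u = f`, `∂u/∂n = 0` admits a weak solution
`u ∈ W^{1,1}(D)` (tested against all `φ ∈ C^∞(closure D)`) satisfying
`‖u‖_{W^{1,1}(D)} ≤ C ‖f‖_{L¹(D)}` with `C = C(R)`. -/
theorem stmt4 (R : ℝ) (hR : 0 < R) :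
    ∃ C > 0, ∀ (x₀ : EuclideanSpace ℝ (Fin 2)) (f : EuclideanSpace ℝ (Fin 2) → ℝ),
      Integrable f (volume.restrict (ball x₀ R)) →
      ∃ (u : EuclideanSpace ℝ (Fin 2) → ℝ) (Du : EuclideanSpace ℝ (Fin 2) → Fin 2 → ℝ),
        IsWeakGrad (ball x₀ R) u Du ∧
        Integrable u (volume.restrict (ball x₀ R)) ∧
        Integrable Du (volume.restrict (ball x₀ R)) ∧
        (∀ φ : EuclideanSpace ℝ (Fin 2) → ℝ, ContDiff ℝ (⊤ : ℕ∞) φ →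
          ∫ x in ball x₀ R,
              ((∑ i : Fin 2, Du x i * fderiv ℝ φ x (EuclideanSpace.single i (1 : ℝ))) +
                u x * φ x)
            = ∫ x in ball x₀ R, f x * φ x) ∧
        (eLpNorm u 1 (volume.restrict (ball x₀ R))).toReal +
            (eLpNorm Du 1 (volume.restrict (ball x₀ R))).toReal ≤
          C * (eLpNorm f 1 (volume.restrict (ball x₀ R))).toReal := by
  obtain ⟨C, hC, h⟩ := exists_isNeumannSolution_ball (E := EuclideanSpace ℝ (Fin 2)) hR
  refine ⟨C, hC, fun x₀ f hf => ?_⟩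
  obtain ⟨u, U, hsol, hle⟩ := h x₀ f hf
  refine ⟨u, fun x i => U x i, hsol.hasWeakGradient.isWeakGrad, hsol.integrableOn,
    Integrable.of_eval fun i => hsol.integrableOn_gradient.eval_piLp i,
    fun φ hφ => hsol.integral_sum_eq (hφ.of_le (by exact_mod_cast le_top)), ?_⟩
  rw [toReal_eLpNorm hsol.integrableOn.aestronglyMeasurable,
    toReal_eLpNorm hf.aestronglyMeasurable,
    lpNorm_one_eq_integral_norm hsol.integrableOn.aestronglyMeasurable,
    lpNorm_one_eq_integral_norm hf.aestronglyMeasurable]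
  exact (add_le_add_right (toReal_eLpNorm_one_ofLp_le hsol.integrableOn_gradient) _).trans hle
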